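/- For every integer m ≥ 1 there exists an indexed family of closed axis-parallel rectangles in ℝ², each with horizontal side of length exactly 1 (i.e., each of the form [a, a+1] × [b, c] with b < c), that forms an m-fold covering of the plane ℝ² and that cannot be decomposed into two coverings. -/

import Mathlib

/-!
STATEMENT 3: For every integer m ≥ 1 there exists an indexed family of closed
axis-parallel rectangles in ℝ², each with horizontal side of length exactly 1
(i.e., each of the form [a, a+1] × [b, c] with b < c), that forms an m-fold
covering of the plane and cannot be decomposed into two coverings.
-/

noncomputable section

/-- The family `C` covers every point of `A ⊆ ℝ²` at least `m` times. -/
def MFoldCover {I : Type*} (m : ℕ) (C : I → Set (ℝ × ℝ)) (A : Set (ℝ × ℝ)) : Prop :=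
  ∀ x ∈ A, ∃ t : Finset I, m ≤ t.card ∧ ∀ i ∈ t, x ∈ C i

/-- The family `C` can be decomposed into two coverings of the plane. -/
def DecomposableIntoTwoCoverings {I : Type*} (C : I → Set (ℝ × ℝ)) : Prop :=
  ∃ I₁ : Set I, (∀ x : ℝ × ℝ, ∃ i ∈ I₁, x ∈ C i) ∧ (∀ x : ℝ × ℝ, ∃ i ∈ I₁ᶜ, x ∈ C i)

/-!
The construction realises a tree hypergraph without polychromatic `2`-colouring by rectangles. Hang
infinitely many complete binary trees of depth `n` over the intervals `[j, j + 1]`, `j ∈ ℕ`: the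
nodes are the dyadic intervals of lengths `2, 4, ..., 2 ^ n`, and the path down to the leaf `j`
turns right in the node of length `2 ^ (i + 1)` exactly when bit `i` of `j` is set. Following the
right child at nodes of one colour and the left child at nodes of the other, one reaches a leaf such
that all right turns on its path have one colour and all left turns the other.

Give the node `[u - 2 ^ i, u + 2 ^ i]` the rectangle with this vertical side and left edge at
`u / 2 ^ n`. A horizontal line at height `j + 1 / 2` meets exactly the rectangles on the path to the
leaf `j`. As their midpoints `u` are within `2 ^ n` of that height, the abscissa
`(j + 1 / 2) / 2 ^ n` picks out those with `u` below the line, that is the right turns, and the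
abscissa larger by `1` picks out the left turns. With `n = 2 * m` one of the two points is covered
`m` times. Choosing such a point for every leaf, some chosen point is monochromatic under any
`2`-colouring. The chosen points lie at separated heights, so every other point of the plane has a
thin rectangle avoiding all of them, and adding `m` copies of these rectangles covers the rest of
the plane without affecting the chosen points.
-/

/-- The family `C` can be split into two families that each cover `A`. Taking `A` smaller than the
plane records where a decomposition into two coverings fails. -/
def DecomposableOn {I : Type*} (C : I → Set (ℝ × ℝ)) (A : Set (ℝ × ℝ)) : Prop :=
  ∃ I₁ : Set I, (∀ x ∈ A, ∃ i ∈ I₁, x ∈ C i) ∧ (∀ x ∈ A, ∃ i ∈ I₁ᶜ, x ∈ C i)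

/-- Closed axis-parallel rectangles with horizontal side of length `1` and nondegenerate vertical
side. -/
def IsUnitWidthRect (R : Set (ℝ × ℝ)) : Prop :=
  ∃ a b c : ℝ, b < c ∧ R = Set.Icc a (a + 1) ×ˢ Set.Icc b c

/-- The rectangle of the node `(i, q)`, the `q`-th one at distance `i + 1` from the leaves:
its vertical side is the dyadic interval with midpoint `(2 * q + 1) * 2 ^ i` and length
`2 ^ (i + 1)`, and its left edge is that midpoint divided by `2 ^ n`. -/
def dyadicRect (n : ℕ) : Fin n × ℕ → Set (ℝ × ℝ) := fun (i, q) ↦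
  Set.Icc ((2 * q + 1) * 2 ^ (i : ℕ) / 2 ^ n : ℝ) ((2 * q + 1) * 2 ^ (i : ℕ) / 2 ^ n + 1) ×ˢ
    Set.Icc (q * 2 ^ (i + 1 : ℕ) : ℝ) ((q + 1) * 2 ^ (i + 1 : ℕ))

/-- The point at the height of the leaf `j` that lies in the rectangles of the nodes in which the
path to `j` turns right (`s = true`) or left (`s = false`). -/
def leafPoint (n : ℕ) (s : Bool) (j : ℕ) : ℝ × ℝ :=
  ((j + 1 / 2) / 2 ^ n + if s then 0 else 1, j + 1 / 2)

section Extension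

variable {I J : Type*} {m : ℕ} {C : I → Set (ℝ × ℝ)} {D : J → Set (ℝ × ℝ)} {A B : Set (ℝ × ℝ)}

lemma MFoldCover.sumElim (hC : MFoldCover m C A) (hD : MFoldCover m D B) :
    MFoldCover m (Sum.elim C D) (A ∪ B) := by
  rintro x (hx | hx)
  · obtain ⟨t, ht, hmem⟩ := hC x hx
    exact ⟨t.map .inl, by rwa [Finset.card_map], by simpa using hmem⟩
  · obtain ⟨t, ht, hmem⟩ := hD x hx
    exact ⟨t.map .inr, by rwa [Finset.card_map], by simpa using hmem⟩

lemma mfoldCover_prod_fin {R : A → Set (ℝ × ℝ)} (hR : ∀ x : A, ↑x ∈ R x) (m : ℕ) :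
    MFoldCover m (fun k : A × Fin m ↦ R k.1) A := by
  intro x hx
  refine ⟨{⟨x, hx⟩} ×ˢ Finset.univ, by simp, ?_⟩
  rintro ⟨y, k⟩ hy
  obtain rfl : ⟨x, hx⟩ = y := by simpa using hy
  exact hR ⟨x, hx⟩

lemma DecomposableIntoTwoCoverings.decomposableOn (h : DecomposableIntoTwoCoverings C)
    (A : Set (ℝ × ℝ)) : DecomposableOn C A :=
  let ⟨I₁, h₁, h₂⟩ := h
  ⟨I₁, fun x _ ↦ h₁ x, fun x _ ↦ h₂ x⟩

lemma DecomposableOn.of_sumElim (hD : ∀ k, Disjoint (D k) A)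
    (h : DecomposableOn (Sum.elim C D) A) : DecomposableOn C A := by
  have restrict {S : Set (I ⊕ J)} (hS : ∀ x ∈ A, ∃ k ∈ S, x ∈ Sum.elim C D k) :
      ∀ x ∈ A, ∃ i ∈ Sum.inl ⁻¹' S, x ∈ C i := by
    intro x hx
    obtain ⟨i | k, hk, hxk⟩ := hS x hx
    · exact ⟨i, hk, hxk⟩
    · exact ((hD k).le_bot ⟨hxk, hx⟩).elim
  obtain ⟨S, h₁, h₂⟩ := h
  exact ⟨Sum.inl ⁻¹' S, restrict h₁, restrict h₂⟩

end Extension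

theorem exists_mfoldCover_univ_not_decomposable.{u} {I : Type u} {m : ℕ} {C : I → Set (ℝ × ℝ)}
    {A : Set (ℝ × ℝ)} {P : Set (ℝ × ℝ) → Prop} (hC : ∀ i, P (C i)) (hcov : MFoldCover m C A)
    (hdec : ¬ DecomposableOn C A) (havoid : ∀ x ∉ A, ∃ R, P R ∧ x ∈ R ∧ Disjoint R A) :
    ∃ (J : Type u) (D : J → Set (ℝ × ℝ)),
      (∀ k, P (D k)) ∧ MFoldCover m D Set.univ ∧ ¬ DecomposableIntoTwoCoverings D := by
  choose R hR hmem hdisj using fun x : ↥Aᶜ ↦ havoid x x.2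
  refine ⟨I ⊕ ↥Aᶜ × Fin m, Sum.elim C fun k : ↥Aᶜ × Fin m ↦ R k.1, ?_, ?_, fun h ↦ hdec ?_⟩
  · exact Sum.forall.2 ⟨hC, fun k ↦ hR k.1⟩
  · simpa only [Set.union_compl_self] using hcov.sumElim (mfoldCover_prod_fin hmem m)
  · exact (h.decomposableOn A).of_sumElim fun k : ↥Aᶜ × Fin m ↦ hdisj k.1

lemma exists_isUnitWidthRect_disjoint_range {ι : Type*} [TopologicalSpace ι] [DiscreteTopology ι]
    {p : ι → ℝ × ℝ} (hp : Topology.IsClosedEmbedding fun i ↦ (p i).2) {x : ℝ × ℝ}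
    (hx : x ∉ Set.range p) :
    ∃ R, IsUnitWidthRect R ∧ x ∈ R ∧ Disjoint R (Set.range p) := by
  have hclosed : IsClosed ((fun i ↦ (p i).2) '' {i | (p i).2 ≠ x.2}) :=
    hp.isClosedMap _ (isClosed_discrete _)
  obtain ⟨ε, hε, hball⟩ : ∃ ε > 0, Metric.closedBall x.2 ε ⊆
      ((fun i ↦ (p i).2) '' {i | (p i).2 ≠ x.2})ᶜ :=
    Metric.nhds_basis_closedBall.mem_iff.1 (hclosed.isOpen_compl.mem_nhds (by simp))
  have height_eq (i : ι) (hi : (p i).2 ∈ Set.Icc (x.2 - ε) (x.2 + ε)) : (p i).2 = x.2 := by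
    by_contra hne
    exact hball (Real.closedBall_eq_Icc ▸ hi) ⟨i, hne, rfl⟩
  -- At most one `p i` has the height of `x`, so `x` can be put on the edge facing away from it.
  obtain ⟨a, hxa, ha⟩ : ∃ a, x.1 ∈ Set.Icc a (a + 1) ∧
      ∀ i, (p i).2 = x.2 → (p i).1 ∉ Set.Icc a (a + 1) := by
    by_cases h : ∃ i, (p i).2 = x.2 ∧ (p i).1 < x.1
    · obtain ⟨i, hi, hlt⟩ := h
      refine ⟨x.1, by simp, fun k hk hmem ↦ ?_⟩
      obtain rfl : k = i := hp.injective (hk.trans hi.symm)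
      exact hlt.not_ge hmem.1
    · push Not at h
      refine ⟨x.1 - 1, by simp, fun k hk hmem ↦ hx ⟨k, Prod.ext ?_ hk⟩⟩
      exact le_antisymm (by simpa using hmem.2) (h k hk)
  refine ⟨_, ⟨a, x.2 - ε, x.2 + ε, by linarith, rfl⟩, ⟨hxa, ?_⟩, ?_⟩
  · exact ⟨by linarith, by linarith⟩
  · rw [Set.disjoint_right]
    rintro _ ⟨i, rfl⟩ ⟨hi₁, hi₂⟩
    exact ha i (height_eq i hi₂) hi₁

section NatCastAddHalf

variable {K : Type*} [Field K] [LinearOrder K] [IsStrictOrderedRing K] {j k : ℕ}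

lemma natCast_le_natCast_add_half_iff : (k : K) ≤ j + 1 / 2 ↔ k ≤ j := by
  constructor <;> intro h
  · have : (k : K) < (j + 1 : ℕ) := by push_cast; linarith
    exact Nat.lt_succ_iff.1 (Nat.cast_lt.1 this)
  · have : (k : K) ≤ j := Nat.cast_le.2 h
    linarith

lemma natCast_add_half_le_natCast_iff : (j : K) + 1 / 2 ≤ k ↔ j < k := by
  constructor <;> intro h
  · have : (j : K) < k := by linarith
    exact Nat.cast_lt.1 this
  · have : ((j + 1 : ℕ) : K) ≤ k := Nat.cast_le.2 h
    push_cast at this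
    linarith

lemma natCast_add_half_mem_dyadic_iff {i q : ℕ} :
    (j + 1 / 2 : K) ∈ Set.Icc (q * 2 ^ (i + 1) : K) ((q + 1) * 2 ^ (i + 1)) ↔
      j / 2 ^ (i + 1) = q := by
  have hlower := natCast_le_natCast_add_half_iff (K := K) (k := q * 2 ^ (i + 1)) (j := j)
  have hupper := natCast_add_half_le_natCast_iff (K := K) (k := (q + 1) * 2 ^ (i + 1)) (j := j)
  push_cast at hlower hupper
  rw [Set.mem_Icc, hlower, hupper, ← Nat.le_div_iff_mul_le (by positivity),
    ← Nat.div_lt_iff_lt_mul (by positivity)]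
  omega

lemma abs_natCast_add_half_sub_midpoint_le {i q : ℕ} (hq : j / 2 ^ (i + 1) = q) :
    |(j + 1 / 2 : K) - (2 * q + 1) * 2 ^ i| ≤ 2 ^ i := by
  obtain ⟨hlower, hupper⟩ := (natCast_add_half_mem_dyadic_iff (K := K)).2 hq
  rw [pow_succ] at hlower hupper
  rw [abs_le]
  constructor <;> linarith

end NatCastAddHalf

lemma exists_forall_testBit_iff (c : ℕ → ℕ → Prop) (n q : ℕ) :
    ∃ j : ℕ, j / 2 ^ n = q ∧ ∀ i < n, j.testBit i ↔ c i (j / 2 ^ (i + 1)) := by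
  classical
  induction n generalizing q with
  | zero => exact ⟨q, by simp⟩
  | succ n ih =>
    obtain ⟨j, hj, hpath⟩ := ih (Nat.bit (decide (c n q)) q)
    have hq : j / 2 ^ (n + 1) = q := by
      rw [pow_succ, ← Nat.div_div_eq_div_mul, hj, Nat.bit_div_two]
    have hn : j.testBit n = decide (c n q) := by
      simpa [hj, Nat.testBit_bit_zero] using (Nat.testBit_div_two_pow (n := n) j 0).symm
    refine ⟨j, hq, fun i hi ↦ ?_⟩
    obtain hi | rfl := Nat.lt_succ_iff_lt_or_eq.1 hi
    · exact hpath i hi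
    · rw [hn, hq, decide_eq_true_iff]

lemma testBit_iff_mul_two_pow_le (i j : ℕ) :
    j.testBit i ↔ (2 * (j / 2 ^ (i + 1)) + 1) * 2 ^ i ≤ j := by
  rw [← Nat.le_div_iff_mul_le (by positivity), pow_succ, ← Nat.div_div_eq_div_mul,
    Nat.testBit_eq_decide_div_mod_eq, decide_eq_true_iff]
  omega

lemma isUnitWidthRect_dyadicRect (n : ℕ) (v : Fin n × ℕ) : IsUnitWidthRect (dyadicRect n v) := by
  refine ⟨_, v.2 * 2 ^ (v.1 + 1 : ℕ), (v.2 + 1) * 2 ^ (v.1 + 1 : ℕ), ?_, rfl⟩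
  gcongr
  exact lt_add_one _

lemma leafPoint_mem_dyadicRect_iff {n j q : ℕ} {s : Bool} {i : Fin n} :
    leafPoint n s j ∈ dyadicRect n (i, q) ↔ j / 2 ^ (i + 1 : ℕ) = q ∧ j.testBit i = s := by
  rw [leafPoint, dyadicRect, Set.prodMk_mem_set_prod_eq, natCast_add_half_mem_dyadic_iff, and_comm]
  refine and_congr_right fun hq ↦ ?_
  have hpos : (0 : ℝ) < 2 ^ n := by positivity
  have hright : ((2 * q + 1) * 2 ^ (i : ℕ) / 2 ^ n : ℝ) ≤ (j + 1 / 2) / 2 ^ n ↔ j.testBit i := by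
    rw [div_le_div_iff_of_pos_right hpos, testBit_iff_mul_two_pow_le, hq]
    exact_mod_cast natCast_le_natCast_add_half_iff (K := ℝ)
  have hleft : (j + 1 / 2) / 2 ^ n ≤ ((2 * q + 1) * 2 ^ (i : ℕ) / 2 ^ n : ℝ) ↔ ¬ j.testBit i := by
    rw [div_le_div_iff_of_pos_right hpos, testBit_iff_mul_two_pow_le, hq, not_le]
    exact_mod_cast natCast_add_half_le_natCast_iff (K := ℝ)
  have hclose : |(j + 1 / 2) / 2 ^ n - ((2 * q + 1) * 2 ^ (i : ℕ) / 2 ^ n : ℝ)| ≤ 1 := by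
    rw [← sub_div, abs_div, abs_of_pos hpos, div_le_one hpos]
    exact (abs_natCast_add_half_sub_midpoint_le hq).trans (pow_le_pow_right₀ one_le_two i.2.le)
  obtain ⟨hge, hle⟩ := abs_le.1 hclose
  cases s
  · rw [if_neg Bool.false_ne_true, Set.mem_Icc, add_le_add_iff_right, hleft, Bool.not_eq_true,
      and_iff_right_iff_imp]
    exact fun _ ↦ by linarith
  · rw [if_pos rfl, add_zero, Set.mem_Icc, hright, and_iff_left_iff_imp]
    exact fun _ ↦ by linarith

lemma not_decomposableOn_range_leafPoint (n : ℕ) (s : ℕ → Bool) :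
    ¬ DecomposableOn (dyadicRect n) (Set.range fun j ↦ leafPoint n (s j) j) := by
  rintro ⟨I₁, h₁, h₂⟩
  obtain ⟨j, -, hpath⟩ :=
    exists_forall_testBit_iff (fun i q ↦ ∃ hi : i < n, (⟨i, hi⟩, q) ∈ I₁) n 0
  have monochromatic (v : Fin n × ℕ) (hv : leafPoint n (s j) j ∈ dyadicRect n v) :
      v ∈ I₁ ↔ s j := by
    obtain ⟨hq, hs⟩ := leafPoint_mem_dyadicRect_iff.1 hv
    rw [← hs, hpath v.1 v.1.2, hq]
    simp
  obtain ⟨v, hv, hjv⟩ := h₁ _ ⟨j, rfl⟩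
  obtain ⟨w, hw, hjw⟩ := h₂ _ ⟨j, rfl⟩
  exact hw ((monochromatic w hjw).2 ((monochromatic v hjv).1 hv))

lemma exists_mfoldCover_range_leafPoint (m : ℕ) :
    ∃ s : ℕ → Bool, MFoldCover m (dyadicRect (2 * m))
      (Set.range fun j ↦ leafPoint (2 * m) (s j) j) := by
  have majority (j : ℕ) : ∃ s, m ≤ (Finset.univ.filter
      fun i : Fin (2 * m) ↦ j.testBit i = s).card :=
    Fintype.exists_le_card_fiber_of_mul_le_card _ (by simp)
  choose s hs using majority
  refine ⟨s, ?_⟩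
  rintro _ ⟨j, rfl⟩
  let ancestor : Fin (2 * m) ↪ Fin (2 * m) × ℕ :=
    ⟨fun i ↦ (i, j / 2 ^ ((i : ℕ) + 1)), fun _ _ h ↦ congrArg Prod.fst h⟩
  refine ⟨(Finset.univ.filter fun i : Fin (2 * m) ↦ j.testBit i = s j).map ancestor,
    (hs j).trans_eq (Finset.card_map _).symm, ?_⟩
  simp only [Finset.forall_mem_map, Finset.mem_filter_univ]
  exact fun i hi ↦ leafPoint_mem_dyadicRect_iff.2 ⟨rfl, hi⟩

lemma isClosedEmbedding_leafPoint_snd (n : ℕ) (s : ℕ → Bool) :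
    Topology.IsClosedEmbedding fun j ↦ (leafPoint n (s j) j).2 :=
  (Homeomorph.addRight (1 / 2 : ℝ)).isClosedEmbedding.comp Nat.isClosedEmbedding_coe_real

theorem statement3 (m : ℕ) (hm : 1 ≤ m) :
    ∃ (I : Type) (a b c : I → ℝ),
      (∀ i, b i < c i) ∧
      MFoldCover m (fun i => Set.Icc (a i) (a i + 1) ×ˢ Set.Icc (b i) (c i)) Set.univ ∧
      ¬ DecomposableIntoTwoCoverings
          (fun i => Set.Icc (a i) (a i + 1) ×ˢ Set.Icc (b i) (c i)) := by
  obtain ⟨s, hcov⟩ := exists_mfoldCover_range_leafPoint m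
  obtain ⟨I, C, hrect, hcov', hdec⟩ := exists_mfoldCover_univ_not_decomposable
    (isUnitWidthRect_dyadicRect (2 * m)) hcov (not_decomposableOn_range_leafPoint (2 * m) s)
    fun _ ↦ exists_isUnitWidthRect_disjoint_range (isClosedEmbedding_leafPoint_snd (2 * m) s)
  choose a b c hbc hC using hrect
  obtain rfl := funext hC
  exact ⟨I, a, b, c, hbc, hcov', hdec⟩
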